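/- arXiv:1706.06911 — 2 statements merged into one kernel-verified Lean document; each statement's English description precedes it below -/
import Mathlib

section
/- The minimum of Σ_{i∈T} w(i) over all T ⊆ {1,…,r} satisfying condition (a) equals the minimum of Σ_{i∈S'} w(i) over all S' ⊆ {1,…,r} with ⋃_{i∈S'} S_i = {1,…,N}. Moreover, if T* satisfies condition (a) and minimizes Σ_{i∈T} w(i) among all T satisfying condition (a), then ⋃_{i∈T*} S_i = {1,…,N} and Σ_{i∈T*} w(i) ≤ Σ_{i∈S'} w(i) for every S' ⊆ {1,…,r} with ⋃_{i∈S'} S_i = {1,…,N}; that is, T* yields a minimum-weight set cover. -/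
/-- Vertices of the reduction digraph: states `x_1,…,x_{N+1}`, the single input `u_1`,
and outputs `y_1,…,y_r`. -/
abbrev RVert (N r : ℕ) : Type := Fin (N + 1) ⊕ Unit ⊕ Fin r

/-- State vertex. -/
def rX {N r : ℕ} (j : Fin (N + 1)) : RVert N r := Sum.inl j

/-- The input vertex `u_1`. -/
def rU {N r : ℕ} : RVert N r := Sum.inr (Sum.inl ())

/-- Output vertex `y_i`. -/
def rY {N r : ℕ} (i : Fin r) : RVert N r := Sum.inr (Sum.inr i)

/-- Edge relation of the reduction digraph `G(T)`: self-loops on every state,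
`x_{N+1} → x_j` for `j ≤ N`, `u_1 → x_{N+1}`, `x_j → y_i` whenever `j ∈ S i`,
and `y_i → u_1` whenever `i ∈ T`. -/
def redEdge {N r : ℕ} (S : Fin r → Finset (Fin N)) (T : Finset (Fin r)) :
    RVert N r → RVert N r → Prop
  | Sum.inl a, Sum.inl c => a = c ∨ (a = Fin.last N ∧ c ≠ Fin.last N)
  | Sum.inr (Sum.inl _), Sum.inl c => c = Fin.last N
  | Sum.inl a, Sum.inr (Sum.inr i) => ∃ j : Fin N, Fin.castSucc j = a ∧ j ∈ S i
  | Sum.inr (Sum.inr i), Sum.inr (Sum.inl _) => i ∈ T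
  | _, _ => False

/-- Two vertices lie in the same strongly connected component: each is reachable
from the other (reachability is the reflexive–transitive closure of the edges). -/
def sameSCC {α : Type*} (E : α → α → Prop) (a b : α) : Prop :=
  Relation.ReflTransGen E a b ∧ Relation.ReflTransGen E b a

/-- `T` satisfies condition (a): every state vertex `x_j` lies in the same SCC of
`G(T)` as both `y_i` and `u_1` for some `i ∈ T`. -/
def redCondA {N r : ℕ} (S : Fin r → Finset (Fin N)) (T : Finset (Fin r)) : Prop :=
  ∀ a : Fin (N + 1), ∃ i ∈ T,
    sameSCC (redEdge S T) (rX a) (rY i) ∧ sameSCC (redEdge S T) (rX a) rU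

/-! A state `x_j` with `j ≤ N` has no successors besides itself and the outputs `y_i` with
`j ∈ S_i`, and `y_i` has no successor besides `u_1`, and that only if `i ∈ T`; so `x_j` reaches
`u_1` exactly when some `i ∈ T` has `j ∈ S_i`. Since `u_1` reaches every state through `x_{N+1}`,
any path from a state to `u_1` closes up to a cycle. Hence condition (a) says precisely that `T`
indexes a set cover, and the two optimization problems have the same feasible sets. -/

/-- The sets `S i` with `i ∈ T` cover the ground type `α`; these index sets are the feasible points
of the weighted set cover problem. -/
def IsSetCover {ι α : Type*} (S : ι → Finset α) (T : Finset ι) : Prop :=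
  ∀ x, ∃ i ∈ T, x ∈ S i

section Reachability

open Relation

variable {N r : ℕ} {S : Fin r → Finset (Fin N)} {T : Finset (Fin r)}

theorem redEdge_rX_castSucc_iff {x : Fin N} {v : RVert N r} :
    redEdge S T (rX x.castSucc) v ↔ v = rX x.castSucc ∨ ∃ i, x ∈ S i ∧ v = rY i := by
  rcases v with a | _ | i <;> simp [redEdge, rX, rY, eq_comm]

theorem redEdge_rX_castSucc_rY {x : Fin N} {i : Fin r} (hxi : x ∈ S i) :
    redEdge S T (rX x.castSucc) (rY i) :=
  redEdge_rX_castSucc_iff.2 (.inr ⟨i, hxi, rfl⟩)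

theorem redEdge_rY_iff {i : Fin r} {v : RVert N r} :
    redEdge S T (rY i) v ↔ i ∈ T ∧ v = rU := by
  rcases v with a | _ | k <;> simp [redEdge, rU, rY]

theorem redEdge_rU_rX_last : redEdge S T rU (rX (Fin.last N)) :=
  rfl

theorem redEdge_rX_last_rX_castSucc (x : Fin N) :
    redEdge S T (rX (Fin.last N)) (rX x.castSucc) :=
  Or.inr ⟨rfl, x.castSucc_ne_last⟩

theorem reflTransGen_rU_rX (a : Fin (N + 1)) : ReflTransGen (redEdge S T) rU (rX a) := by
  have h_last : ReflTransGen (redEdge S T) rU (rX (Fin.last N)) := .single redEdge_rU_rX_last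
  induction a using Fin.lastCases with
  | last => exact h_last
  | cast x => exact h_last.tail (redEdge_rX_last_rX_castSucc x)

theorem reflTransGen_rY_rU_iff {i : Fin r} :
    ReflTransGen (redEdge S T) (rY i) rU ↔ i ∈ T := by
  refine ⟨fun h => ?_, fun hi => .single (redEdge_rY_iff.2 ⟨hi, rfl⟩)⟩
  obtain h_eq | ⟨v, h_edge, -⟩ := h.cases_head
  · simp [rY, rU] at h_eq
  · exact (redEdge_rY_iff.1 h_edge).1

theorem reflTransGen_rX_castSucc_rU_iff {x : Fin N} :
    ReflTransGen (redEdge S T) (rX x.castSucc) rU ↔ ∃ i ∈ T, x ∈ S i := by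
  constructor
  · intro h
    generalize h_start : rX x.castSucc = v at h
    induction h using ReflTransGen.head_induction_on with
    | refl => simp [rX, rU] at h_start
    | head h_edge h_rest ih =>
      subst h_start
      obtain rfl | ⟨i, hxi, rfl⟩ := redEdge_rX_castSucc_iff.1 h_edge
      · exact ih rfl
      · exact ⟨i, reflTransGen_rY_rU_iff.1 h_rest, hxi⟩
  · rintro ⟨i, hi, hxi⟩
    exact .head (redEdge_rX_castSucc_rY hxi) (reflTransGen_rY_rU_iff.2 hi)

theorem redCondA_iff_forall_exists_reflTransGen :
    redCondA S T ↔ ∀ a, ∃ i ∈ T, ReflTransGen (redEdge S T) (rX a) (rY i) := by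
  refine forall_congr' fun a => exists_congr fun i => and_congr_right fun hi => ?_
  refine ⟨fun h => h.1.1, fun h_out => ?_⟩
  have h_in : ReflTransGen (redEdge S T) (rY i) rU := reflTransGen_rY_rU_iff.2 hi
  have h_back : ReflTransGen (redEdge S T) rU (rX a) := reflTransGen_rU_rX a
  exact ⟨⟨h_out, h_in.trans h_back⟩, h_out.trans h_in, h_back⟩

theorem IsSetCover.exists_reflTransGen_rX_rY (hN : 1 ≤ N) (hT : IsSetCover S T)
    (a : Fin (N + 1)) : ∃ i ∈ T, ReflTransGen (redEdge S T) (rX a) (rY i) := by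
  induction a using Fin.lastCases with
  | last =>
    obtain ⟨i, hi, hxi⟩ := hT ⟨0, hN⟩
    exact ⟨i, hi, .head (redEdge_rX_last_rX_castSucc _) (.single (redEdge_rX_castSucc_rY hxi))⟩
  | cast x =>
    obtain ⟨i, hi, hxi⟩ := hT x
    exact ⟨i, hi, .single (redEdge_rX_castSucc_rY hxi)⟩

theorem redCondA_iff_isSetCover (hN : 1 ≤ N) : redCondA S T ↔ IsSetCover S T := by
  refine ⟨fun h x => ?_, fun hT => ?_⟩
  · obtain ⟨_, _, _, h_reach, _⟩ := h x.castSucc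
    exact reflTransGen_rX_castSucc_rU_iff.1 h_reach
  · exact redCondA_iff_forall_exists_reflTransGen.2 (hT.exists_reflTransGen_rX_rY hN)

end Reachability

theorem exists_isLeast_setOf_exists_eq {α β : Type*} [Finite α] [LinearOrder β] {p : α → Prop}
    (hp : ∃ a, p a) (f : α → β) : ∃ c, IsLeast {c | ∃ a, p a ∧ c = f a} c := by
  obtain ⟨a, ha, h_min⟩ := Set.exists_min_image {a | p a} f (Set.toFinite _) hp
  refine ⟨f a, ⟨a, ha, rfl⟩, ?_⟩
  rintro _ ⟨b, hb, rfl⟩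
  exact h_min b hb

theorem reduction_opt_eq_setCover_opt_general {M : Type*} [AddCommMonoid M] [LinearOrder M]
    {N r : ℕ} (hN : 1 ≤ N) (S : Fin r → Finset (Fin N))
    (hcover : ∀ x : Fin N, ∃ i : Fin r, x ∈ S i) (w : Fin r → M) :
    (∃ c, IsLeast {c : M | ∃ T : Finset (Fin r), redCondA S T ∧ c = ∑ i ∈ T, w i} c ∧
        IsLeast {c : M | ∃ T : Finset (Fin r), IsSetCover S T ∧ c = ∑ i ∈ T, w i} c) ∧
    ∀ Tstar : Finset (Fin r), redCondA S Tstar →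
      (∀ T : Finset (Fin r), redCondA S T → ∑ i ∈ Tstar, w i ≤ ∑ i ∈ T, w i) →
      (IsSetCover S Tstar ∧
        ∀ T' : Finset (Fin r), IsSetCover S T' → ∑ i ∈ Tstar, w i ≤ ∑ i ∈ T', w i) := by
  have h_univ : IsSetCover S Finset.univ := fun x =>
    (hcover x).imp fun i hxi => ⟨Finset.mem_univ i, hxi⟩
  obtain ⟨c, hc⟩ :=
    exists_isLeast_setOf_exists_eq ⟨Finset.univ, h_univ⟩ fun T : Finset (Fin r) => ∑ i ∈ T, w i
  simp only [redCondA_iff_isSetCover hN]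
  exact ⟨⟨c, hc, hc⟩, fun _ h_feasible h_min => ⟨h_feasible, h_min⟩⟩

/-- the minimum weight of a `T` satisfying condition (a) equals the
minimum weight of a set cover; moreover any minimum-weight `T*` satisfying
condition (a) is a minimum-weight set cover. -/
theorem reduction_opt_eq_setCover_opt {N r : ℕ} (hN : 1 ≤ N) (hr : 1 ≤ r)
    (S : Fin r → Finset (Fin N)) (hcover : ∀ x : Fin N, ∃ i : Fin r, x ∈ S i)
    (w : Fin r → NNReal) :
    (sInf {c : NNReal | ∃ T : Finset (Fin r), redCondA S T ∧ c = ∑ i ∈ T, w i}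
        = sInf {c : NNReal | ∃ T : Finset (Fin r),
            (∀ x : Fin N, ∃ i ∈ T, x ∈ S i) ∧ c = ∑ i ∈ T, w i}) ∧
    ∀ Tstar : Finset (Fin r), redCondA S Tstar →
      (∀ T : Finset (Fin r), redCondA S T → ∑ i ∈ Tstar, w i ≤ ∑ i ∈ T, w i) →
      ((∀ x : Fin N, ∃ i ∈ Tstar, x ∈ S i) ∧
        ∀ T' : Finset (Fin r), (∀ x : Fin N, ∃ i ∈ T', x ∈ S i) →
          ∑ i ∈ Tstar, w i ≤ ∑ i ∈ T', w i) := by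
  obtain ⟨⟨c, h_red, h_cover⟩, h_opt⟩ := reduction_opt_eq_setCover_opt_general hN S hcover w
  exact ⟨h_red.csInf_eq.trans h_cover.csInf_eq.symm, h_opt⟩
end

section
/- Suppose the state digraph has a line condensation C_1,…,C_ℓ. A feedback set K satisfies condition (a) — every state vertex lies in the same strongly connected component of the closed-loop digraph as both endpoints of some feedback edge of K — if and only if for every k ∈ {1,…,ℓ} there exist (i,j) ∈ K and indices q ≤ k ≤ r such that some input edge goes from u_i to a state in C_q and some output edge goes from a state in C_r to y_j. -/
/-- Vertices of a structured system: states `x_1,…,x_n`, inputs `u_1,…,u_m`,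
outputs `y_1,…,y_p`. -/
abbrev SVert (n m p : ℕ) : Type := Fin n ⊕ Fin m ⊕ Fin p

/-- State vertex. -/
def stX {n m p : ℕ} (a : Fin n) : SVert n m p := Sum.inl a

/-- Input vertex. -/
def stU {n m p : ℕ} (i : Fin m) : SVert n m p := Sum.inr (Sum.inl i)

/-- Output vertex. -/
def stY {n m p : ℕ} (j : Fin p) : SVert n m p := Sum.inr (Sum.inr j)

/-- Edge relation of the closed-loop digraph: state edges (given by `A`), input
edges `u_i → x_c` (given by `B`), output edges `x_a → y_j` (given by `Co`), and
feedback edges `y_j → u_i` for `(i, j) ∈ K`. -/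
def closedEdge {n m p : ℕ} (A : Fin n → Fin n → Prop) (B : Fin m → Fin n → Prop)
    (Co : Fin n → Fin p → Prop) (K : Finset (Fin m × Fin p)) :
    SVert n m p → SVert n m p → Prop
  | Sum.inl a, Sum.inl c => A a c
  | Sum.inr (Sum.inl i), Sum.inl c => B i c
  | Sum.inl a, Sum.inr (Sum.inr j) => Co a j
  | Sum.inr (Sum.inr j), Sum.inr (Sum.inl i) => (i, j) ∈ K
  | _, _ => False

/-- Condition (a): every state vertex lies in the same SCC of the closed-loop
digraph as both endpoints `u_i`, `y_j` of some feedback edge `(i, j) ∈ K`. -/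
def condA {n m p : ℕ} (A : Fin n → Fin n → Prop) (B : Fin m → Fin n → Prop)
    (Co : Fin n → Fin p → Prop) (K : Finset (Fin m × Fin p)) : Prop :=
  ∀ a : Fin n, ∃ e ∈ K,
    sameSCC (closedEdge A B Co K) (stX a) (stU e.1) ∧
    sameSCC (closedEdge A B Co K) (stX a) (stY e.2)

/-- Condition (b): a collection of vertex-disjoint directed cycles of the
closed-loop digraph covers all state vertices.  Encoded as: there is a set `S`
of vertices containing all state vertices and a map `f` permuting `S` such that
`v → f v` is an edge for every `v ∈ S` (the cycles of `f` are the cycle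
collection). -/
def condB {n m p : ℕ} (A : Fin n → Fin n → Prop) (B : Fin m → Fin n → Prop)
    (Co : Fin n → Fin p → Prop) (K : Finset (Fin m × Fin p)) : Prop :=
  ∃ (S : Set (SVert n m p)) (f : SVert n m p → SVert n m p),
    Set.BijOn f S S ∧ (∀ a : Fin n, stX a ∈ S) ∧
    ∀ v ∈ S, closedEdge A B Co K v (f v)

/-- Cost of a feedback set under cost matrix `P`. -/
def fcost {m p : ℕ} (P : Fin m → Fin p → NNReal) (K : Finset (Fin m × Fin p)) : NNReal :=
  ∑ e ∈ K, P e.1 e.2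

/-- `C : Fin n → Fin ℓ` (assigning each state its class) is a line condensation
of the state digraph: classes are nonempty, each class induces a strongly
connected subgraph, every state edge stays in a class or goes from `C_k` to
`C_{k+1}`, and each consecutive pair of classes is linked by a state edge. -/
structure IsLineCondensation {n : ℕ} (A : Fin n → Fin n → Prop) (ℓ : ℕ)
    (C : Fin n → Fin ℓ) : Prop where
  nonempty : ∀ k : Fin ℓ, ∃ a : Fin n, C a = k
  strong : ∀ a c : Fin n, C a = C c →
    Relation.ReflTransGen (fun v w => A v w ∧ C v = C a ∧ C w = C a) a c
  step : ∀ a c : Fin n, A a c → C c = C a ∨ (C c : ℕ) = (C a : ℕ) + 1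
  linked : ∀ k : Fin ℓ, (k : ℕ) + 1 < ℓ →
    ∃ a c : Fin n, A a c ∧ C a = k ∧ (C c : ℕ) = (k : ℕ) + 1

/-- The feedback set `K` covers class `C_k`: some `(i, j) ∈ K` admits indices
`q ≤ k ≤ r` with an input edge from `u_i` into `C_q` and an output edge from
`C_r` to `y_j`. -/
def coversSCC {n m p ℓ : ℕ} (B : Fin m → Fin n → Prop) (Co : Fin n → Fin p → Prop)
    (C : Fin n → Fin ℓ) (K : Finset (Fin m × Fin p)) (k : Fin ℓ) : Prop :=
  ∃ e ∈ K, ∃ q r : Fin ℓ, q ≤ k ∧ k ≤ r ∧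
    (∃ s : Fin n, B e.1 s ∧ C s = q) ∧ (∃ s : Fin n, Co s e.2 ∧ C s = r)

/-!
A closed walk through an input or output and a state of class `k` must leave the states through an
output edge, and after starting in `k` it can do so only from class `k` or a later one. If no
feedback edge covers `k`, every feedback edge fired from class `k` or later re-enters strictly after
`k`, and state edges never lead back, so the walk cannot return. Conversely, a covering feedback
edge closes up to a cycle through any state of `k`, because every class reaches all later ones.
-/

open Relation

namespace IsLineCondensation

variable {n ℓ : ℕ} {A : Fin n → Fin n → Prop} {C : Fin n → Fin ℓ}

theorem reflTransGen_of_eq (h : IsLineCondensation A ℓ C) {a c : Fin n} (hac : C a = C c) :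
    ReflTransGen A a c :=
  ReflTransGen.mono (fun _ _ hvw => hvw.1) _ _ (h.strong a c hac)

theorem reflTransGen_of_le (h : IsLineCondensation A ℓ C) {a c : Fin n} (hac : C a ≤ C c) :
    ReflTransGen A a c := by
  obtain ⟨d, hd⟩ := Nat.exists_eq_add_of_le (Fin.le_def.mp hac)
  clear hac
  induction d generalizing a with
  | zero => exact h.reflTransGen_of_eq (Fin.ext hd.symm)
  | succ d ih =>
    obtain ⟨v, w, hvw, hv, hw⟩ := h.linked (C a) (by lia)
    exact ((h.reflTransGen_of_eq hv.symm).tail hvw).trans (ih (by lia))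

theorem le_of_edge (h : IsLineCondensation A ℓ C) {a c : Fin n} (hac : A a c) : C a ≤ C c := by
  rcases h.step a c hac with hc | hc
  · exact hc.ge
  · exact Fin.le_def.mpr (by lia)

theorem reflTransGen_iff_le (h : IsLineCondensation A ℓ C) {a c : Fin n} :
    ReflTransGen A a c ↔ C a ≤ C c := by
  refine ⟨fun hac => ?_, h.reflTransGen_of_le⟩
  induction hac with
  | refl => exact le_rfl
  | tail _ hbc ih => exact ih.trans (h.le_of_edge hbc)

end IsLineCondensation

section ClosedLoop

variable {n m p ℓ : ℕ} {A : Fin n → Fin n → Prop} {B : Fin m → Fin n → Prop}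
  {Co : Fin n → Fin p → Prop} {C : Fin n → Fin ℓ} {K : Finset (Fin m × Fin p)}

theorem reflTransGen_closedEdge_stX {a c : Fin n} (hac : ReflTransGen A a c) :
    ReflTransGen (closedEdge A B Co K) (stX a) (stX c) :=
  ReflTransGen.lift stX (fun _ _ hvw => hvw) _ _ hac

theorem exists_output_of_reflTransGen_stX_inr {a : Fin n} {z : Fin m ⊕ Fin p}
    (haz : ReflTransGen (closedEdge A B Co K) (stX a) (Sum.inr z)) :
    ∃ s j, ReflTransGen A a s ∧ Co s j ∧
      ReflTransGen (closedEdge A B Co K) (stY j) (Sum.inr z) := by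
  generalize hv : (stX a : SVert n m p) = v at haz
  induction haz using ReflTransGen.head_induction_on generalizing a with
  | refl => cases hv
  | @head _ w hvw hwz ih =>
    subst hv
    rcases w with c | i | j
    · obtain ⟨s, j, hcs, hsj, hjz⟩ := ih rfl
      exact ⟨s, j, .head hvw hcs, hsj, hjz⟩
    · exact hvw.elim
    · exact ⟨a, j, .refl, hvw, hwz⟩

/-- The invariant of a walk that has left the states through an output edge from class `k` or later
and has not come back to class `k`: it is only ever at states strictly after `k`, at outputs fed
from class `k` or later, and at inputs fed back from such outputs. -/
def BeyondClass (Co : Fin n → Fin p → Prop) (C : Fin n → Fin ℓ) (K : Finset (Fin m × Fin p))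
    (k : Fin ℓ) : SVert n m p → Prop
  | Sum.inl a => k < C a
  | Sum.inr (Sum.inl i) => ∃ j, (i, j) ∈ K ∧ ∃ s, Co s j ∧ k ≤ C s
  | Sum.inr (Sum.inr j) => ∃ s, Co s j ∧ k ≤ C s

theorem BeyondClass.edge (hmono : ∀ a c, A a c → C a ≤ C c) {k : Fin ℓ}
    (hk : ¬ coversSCC B Co C K k) {v w : SVert n m p} (hv : BeyondClass Co C K k v)
    (hvw : closedEdge A B Co K v w) : BeyondClass Co C K k w := by
  rcases v with a | i | j <;> rcases w with c | i' | j'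
  case inl.inl => exact lt_of_lt_of_le hv (hmono a c hvw)
  case inl.inr.inr => exact ⟨a, hvw, le_of_lt hv⟩
  case inr.inl.inl =>
    obtain ⟨j, hij, s, hsj, hks⟩ := hv
    by_contra hkc
    exact hk ⟨(i, j), hij, C c, C s, not_lt.mp hkc, hks, ⟨c, hvw, rfl⟩, ⟨s, hsj, rfl⟩⟩
  case inr.inr.inr.inl => exact ⟨j, hvw, hv⟩
  all_goals exact hvw.elim

theorem BeyondClass.reflTransGen (hmono : ∀ a c, A a c → C a ≤ C c) {k : Fin ℓ}
    (hk : ¬ coversSCC B Co C K k) {v w : SVert n m p} (hv : BeyondClass Co C K k v)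
    (hvw : ReflTransGen (closedEdge A B Co K) v w) : BeyondClass Co C K k w := by
  induction hvw with
  | refl => exact hv
  | tail _ hbc ih => exact ih.edge hmono hk hbc

theorem coversSCC_of_sameSCC_inr (hmono : ∀ a c, ReflTransGen A a c → C a ≤ C c) {a : Fin n}
    {z : Fin m ⊕ Fin p} (haz : sameSCC (closedEdge A B Co K) (stX a) (Sum.inr z)) :
    coversSCC B Co C K (C a) := by
  by_contra hk
  obtain ⟨s, j, has, hsj, hjz⟩ := exists_output_of_reflTransGen_stX_inr haz.1
  have hj : BeyondClass Co C K (C a) (stY j) := ⟨s, hsj, hmono a s has⟩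
  have ha : BeyondClass Co C K (C a) (stX a) :=
    hj.reflTransGen (fun b c hbc => hmono b c (.single hbc)) hk (hjz.trans haz.2)
  exact lt_irrefl (C a) ha

theorem exists_feedback_sameSCC_of_coversSCC (hreach : ∀ a c, C a ≤ C c → ReflTransGen A a c)
    {a : Fin n} (ha : coversSCC B Co C K (C a)) :
    ∃ e ∈ K, sameSCC (closedEdge A B Co K) (stX a) (stU e.1) ∧
      sameSCC (closedEdge A B Co K) (stX a) (stY e.2) := by
  obtain ⟨⟨i, j⟩, he, _, _, hsa, hat, ⟨s, his, rfl⟩, ⟨t, htj, rfl⟩⟩ := ha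
  have hinput : closedEdge A B Co K (stU i) (stX s) := his
  have houtput : closedEdge A B Co K (stX t) (stY j) := htj
  have hfeedback : closedEdge A B Co K (stY j) (stU i) := he
  have hto : ReflTransGen (closedEdge A B Co K) (stX a) (stY j) :=
    (reflTransGen_closedEdge_stX (hreach a t hat)).tail houtput
  have hfrom : ReflTransGen (closedEdge A B Co K) (stU i) (stX a) :=
    .head hinput (reflTransGen_closedEdge_stX (hreach s a hsa))
  exact ⟨(i, j), he, ⟨hto.tail hfeedback, hfrom⟩, ⟨hto, hfrom.head hfeedback⟩⟩

/-- Here state edges may also skip forward over classes. -/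
theorem line_condA_iff_covers_general (hsurj : Function.Surjective C)
    (hreach : ∀ a c, ReflTransGen A a c ↔ C a ≤ C c) :
    condA A B Co K ↔ ∀ k : Fin ℓ, coversSCC B Co C K k := by
  rw [hsurj.forall]
  refine forall_congr' fun a => ⟨?_, ?_⟩
  · rintro ⟨_, -, hau, -⟩
    exact coversSCC_of_sameSCC_inr (fun b c => (hreach b c).mp) hau
  · exact exists_feedback_sameSCC_of_coversSCC fun b c => (hreach b c).mpr

end ClosedLoop

/-- under a line condensation, `K` satisfies condition (a) iff for
every class index `k` some feedback edge `(i, j) ∈ K` has an input edge into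
some `C_q` and an output edge from some `C_r` with `q ≤ k ≤ r`. -/
theorem line_condA_iff_covers {n m p ℓ : ℕ}
    (A : Fin n → Fin n → Prop) (B : Fin m → Fin n → Prop) (Co : Fin n → Fin p → Prop)
    (C : Fin n → Fin ℓ) (h : IsLineCondensation A ℓ C)
    (K : Finset (Fin m × Fin p)) :
    condA A B Co K ↔ ∀ k : Fin ℓ, coversSCC B Co C K k :=
  line_condA_iff_covers_general h.nonempty fun _ _ => h.reflTransGen_iff_le
end
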